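/- For every partition λ and every k∈ℕ, the Schur multiple zeta value ζ_λ({2k}^λ) is a rational multiple of π^{2k|λ|}, where |λ| is the weight of λ. -/

import Mathlib

/-!
Put `x m = m ^ (-2k)`. The tableaux of shape `λ` with entries at most `N` contribute the Schur
polynomial `s_λ(x 1, …, x N)` to the series, and the whole value is its limit as `N → ∞`; the
terms are nonnegative, so convergence of these partial sums also yields summability
(`SMZ.hasSum_weight`).

By the Jacobi–Trudi formula, `s_λ = det (h_{λ_i - i + j})` (`SMZ.schurSum_eq_jacobiTrudi`).
Both sides satisfy the same recursion in `N`: for tableaux, removing the boxes with entry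
`N + 1` removes a horizontal strip, so `s_λ(x 1, …, x (N+1))` is the sum of
`x (N+1) ^ (|λ| - |μ|) * s_μ(x 1, …, x N)` over `μ` with `λ_{i+1} ≤ μ_i ≤ λ_i`
(`SMZ.schurSum_succ`). For the determinant, subtracting a multiple of row `i + 1` from row `i`
turns row `i` into the sum over `λ_{i+1} ≤ t ≤ λ_i` of multiples of the corresponding rows in `N`
variables, and multilinearity gives the recursion (`SMZ.jacobiTrudi_succ`).

Newton's identities (`SMZ.newton`) express `h_n` through the power sums, which converge to the
even zeta values `ζ(2kd) ∈ ℚ π^{2kd}`. Hence `h_n` tends to an element of `ℚ π^{2kn}`, and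
every term of the Leibniz expansion of the determinant tends to one of `ℚ π^{2k|λ|}`.
-/

open scoped BigOperators

noncomputable section

namespace SMZ

/-- Box `(i,j)` (0-indexed) lies in the Young diagram of the partition `lam`. -/
def InDiag (lam : ℕ → ℕ) (p : ℕ × ℕ) : Prop := p.2 < lam p.1

/-- `(i,j)` is a corner of the Young diagram of `lam`. -/
def IsCorner (lam : ℕ → ℕ) (p : ℕ × ℕ) : Prop :=
  InDiag lam p ∧ ¬ InDiag lam (p.1 + 1, p.2) ∧ ¬ InDiag lam (p.1, p.2 + 1)

/-- `lam` is the part function of a partition with exactly `r` positive parts. -/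
def IsPartitionWith (r : ℕ) (lam : ℕ → ℕ) : Prop :=
  Antitone lam ∧ ∀ i, 0 < lam i ↔ i < r

/-- Semi-standard Young tableau of shape `lam`, normalized to be `0` off the diagram. -/
structure IsSSYT (lam : ℕ → ℕ) (m : ℕ × ℕ → ℕ) : Prop where
  zero_off : ∀ p, ¬ InDiag lam p → m p = 0
  pos : ∀ p, InDiag lam p → 0 < m p
  row_le : ∀ i j, InDiag lam (i, j + 1) → m (i, j) ≤ m (i, j + 1)
  col_lt : ∀ i j, InDiag lam (i + 1, j) → m (i, j) < m (i + 1, j)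

/-- The summand `1 / M^s` of the Schur multiple zeta series. -/
def term (r : ℕ) (lam : ℕ → ℕ) (s : ℕ × ℕ → ℂ) (m : ℕ × ℕ → ℕ) : ℂ :=
  ∏ i ∈ Finset.range r, ∏ j ∈ Finset.range (lam i), (m (i, j) : ℂ) ^ (-(s (i, j)))

/-- The Schur multiple zeta function `ζ_λ(s)`. -/
def schurZeta (r : ℕ) (lam : ℕ → ℕ) (s : ℕ × ℕ → ℂ) : ℂ :=
  ∑' M : {m : ℕ × ℕ → ℕ // IsSSYT lam m}, term r lam s M.1

/-- The region `W_λ` of (sufficient) absolute convergence. -/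
def MemW (lam : ℕ → ℕ) (s : ℕ × ℕ → ℂ) : Prop :=
  (∀ p, InDiag lam p → 1 ≤ (s p).re) ∧ ∀ p, IsCorner lam p → 1 < (s p).re

/-- Euler–Zagier multiple zeta function. -/
def mzv {n : ℕ} (s : Fin n → ℂ) : ℂ :=
  ∑' f : {f : Fin n → ℕ // StrictMono f ∧ ∀ i, 0 < f i},
    ∏ i, (f.1 i : ℂ) ^ (-(s i))

/-- Euler–Zagier multiple zeta-star function. -/
def mzvStar {n : ℕ} (s : Fin n → ℂ) : ℂ :=
  ∑' f : {f : Fin n → ℕ // Monotone f ∧ ∀ i, 0 < f i},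
    ∏ i, (f.1 i : ℂ) ^ (-(s i))

/-- `ζ⋆(a start, a (start+1), …)` with `len` terms; `1` if `len = 0`, `0` if `len < 0`. -/
def mzvStarSeq (a : ℤ → ℂ) (start len : ℤ) : ℂ :=
  if len < 0 then 0 else mzvStar fun i : Fin len.toNat => a (start + (i : ℕ))

/-- `ζ(a start, a (start-1), …)` with `len` terms; `1` if `len = 0`, `0` if `len < 0`. -/
def mzvSeqDesc (a : ℤ → ℂ) (start len : ℤ) : ℂ :=
  if len < 0 then 0 else mzv fun i : Fin len.toNat => a (start - (i : ℕ))

/-- The conjugate partition: `conjPart r lam c` is the number of rows `i < r` with a box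
in column `c`, i.e. the (0-indexed) `c`-th part of `λ'`. -/
def conjPart (r : ℕ) (lam : ℕ → ℕ) (c : ℕ) : ℕ :=
  ((Finset.range r).filter fun i => c < lam i).card

end SMZ

namespace SMZ

/-! ### Tableaux with bounded entries -/

/-- Extension by zero of a finite sequence of parts to a part function on `ℕ`. -/
def pad {r : ℕ} (l : Fin r → ℕ) (i : ℕ) : ℕ := if h : i < r then l ⟨i, h⟩ else 0

/-- The sequences `μ` of length `r` interlacing with `lam`, i.e. those for which
`lam / μ` is a horizontal strip: `lam (i + 1) ≤ μ i ≤ lam i`. -/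
def interlacing (r : ℕ) (lam : ℕ → ℕ) : Finset (Fin r → ℕ) :=
  Fintype.piFinset fun i : Fin r => Finset.Icc (lam (i + 1)) (lam i)

open Classical in
/-- Extends a tableau `m` of shape `mu` to shape `lam` by putting `a` into each new box. -/
def extendTab (lam mu : ℕ → ℕ) (a : ℕ) (m : ℕ × ℕ → ℕ) (p : ℕ × ℕ) : ℕ :=
  if InDiag mu p then m p else if InDiag lam p then a else 0

open Classical in
/-- The finite set of semi-standard tableaux of shape `lam` (with at most `r` rows) and
entries at most `N`, generated by adding the boxes with entry `N` as a horizontal strip. -/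
def tableaux (r : ℕ) : ℕ → (ℕ → ℕ) → Finset (ℕ × ℕ → ℕ)
  | 0, lam => if lam = 0 then {0} else ∅
  | N + 1, lam => (interlacing r lam).biUnion fun mu =>
      (tableaux r N (pad mu)).image (extendTab lam (pad mu) (N + 1))

/-- `lam` is the part function of a partition with at most `r` parts. -/
def IsShape (r : ℕ) (lam : ℕ → ℕ) : Prop := Antitone lam ∧ ∀ i, r ≤ i → lam i = 0

lemma pad_le {r : ℕ} {lam : ℕ → ℕ} {mu : Fin r → ℕ} (hmu : mu ∈ interlacing r lam) (i : ℕ) :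
    pad mu i ≤ lam i := by
  simp only [interlacing, Fintype.mem_piFinset, Finset.mem_Icc] at hmu
  unfold pad
  split_ifs with h
  · exact (hmu ⟨i, h⟩).2
  · exact Nat.zero_le _

lemma le_pad {r : ℕ} {lam : ℕ → ℕ} (hl : IsShape r lam) {mu : Fin r → ℕ}
    (hmu : mu ∈ interlacing r lam) (i : ℕ) : lam (i + 1) ≤ pad mu i := by
  simp only [interlacing, Fintype.mem_piFinset, Finset.mem_Icc] at hmu
  unfold pad
  split_ifs with h
  · exact (hmu ⟨i, h⟩).1
  · exact (hl.2 (i + 1) (by omega)).le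

lemma isShape_pad {r : ℕ} {lam : ℕ → ℕ} (hl : IsShape r lam) {mu : Fin r → ℕ}
    (hmu : mu ∈ interlacing r lam) : IsShape r (pad mu) := by
  refine ⟨antitone_nat_of_succ_le fun i => (pad_le hmu _).trans (le_pad hl hmu _), ?_⟩
  intro i hi
  simp [pad, not_lt.2 hi]

lemma IsSSYT.row_mono {lam : ℕ → ℕ} {m : ℕ × ℕ → ℕ} (hm : IsSSYT lam m) (i j d : ℕ)
    (h : j + d < lam i) : m (i, j) ≤ m (i, j + d) := by
  induction d with
  | zero => rfl
  | succ d ih => exact (ih (by omega)).trans (hm.row_le i (j + d) h)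

lemma extendTab_isSSYT {r : ℕ} {lam : ℕ → ℕ} (hl : IsShape r lam) {mu : Fin r → ℕ}
    (hmu : mu ∈ interlacing r lam) {N : ℕ} {m : ℕ × ℕ → ℕ} (hm : IsSSYT (pad mu) m)
    (hN : ∀ p, m p ≤ N) : IsSSYT lam (extendTab lam (pad mu) (N + 1) m) := by
  have h1 := pad_le hmu
  have h2 := le_pad hl hmu
  refine ⟨?_, ?_, ?_, ?_⟩
  · rintro ⟨i, j⟩ h
    have := h1 i
    simp only [InDiag, extendTab] at *
    split_ifs <;> grind
  · rintro ⟨i, j⟩ h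
    have := hm.pos (i, j)
    simp only [InDiag, extendTab] at *
    split_ifs <;> grind
  · intro i j h
    have := hm.row_le i j
    have := hN (i, j)
    simp only [InDiag, extendTab] at *
    split_ifs <;> grind
  · intro i j h
    have := hm.col_lt i j
    have := hN (i, j)
    have := h2 i
    simp only [InDiag, extendTab] at *
    split_ifs <;> grind

lemma exists_cutoff (P : ℕ → Prop) (b : ℕ) (hb : ∀ j, P j → j < b)
    (hP : ∀ i j, i ≤ j → P j → P i) : ∃ c, ∀ j, j < c ↔ P j := by
  classical
  have hex : ∃ c, ¬ P c := ⟨b, fun h => lt_irrefl _ (hb b h)⟩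
  refine ⟨Nat.find hex, fun j => ⟨fun h => not_not.1 (Nat.find_min hex h), fun h => ?_⟩⟩
  by_contra hlt
  exact Nat.find_spec hex (hP _ _ (not_lt.1 hlt) h)

/-- Removing the entries `N + 1` from a tableau removes a horizontal strip. -/
lemma exists_extendTab_eq {r : ℕ} {lam : ℕ → ℕ} (hl : IsShape r lam) {N : ℕ}
    {m : ℕ × ℕ → ℕ} (hm : IsSSYT lam m) (hN : ∀ p, m p ≤ N + 1) :
    ∃ mu ∈ interlacing r lam, ∃ m', (IsSSYT (pad mu) m' ∧ ∀ p, m' p ≤ N) ∧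
      extendTab lam (pad mu) (N + 1) m' = m := by
  classical
  have hc : ∀ i, ∃ c, ∀ j, j < c ↔ (j < lam i ∧ m (i, j) ≤ N) := fun i =>
    exists_cutoff _ (lam i) (fun j h => h.1) (by
      rintro a b hab ⟨h1, h2⟩
      obtain ⟨d, rfl⟩ := Nat.exists_eq_add_of_le hab
      exact ⟨by omega, (hm.row_mono i a d h1).trans h2⟩)
  choose c hc using hc
  have hpad : pad (fun i : Fin r => c i) = c := by
    funext i
    unfold pad
    split_ifs with h
    · rfl
    · by_contra hne
      have := ((hc i 0).1 (by omega)).1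
      rw [hl.2 i (by omega)] at this
      omega
  refine ⟨fun i => c i, ?_, fun p => if p.2 < c p.1 then m p else 0, ?_⟩
  · simp only [interlacing, Fintype.mem_piFinset, Finset.mem_Icc]
    intro i
    constructor
    · by_contra hlt
      have h1 := hm.col_lt i (c i) (not_le.1 hlt)
      have h2 := hN (i + 1, c i)
      have h3 : lam (i + 1) ≤ lam i := hl.1 (Nat.le_succ _)
      have := (hc i (c i)).2 ⟨by omega, by omega⟩
      omega
    · by_contra hlt
      have := ((hc i (lam i)).1 (by omega)).1
      omega
  · rw [hpad]
    refine ⟨⟨⟨?_, ?_, ?_, ?_⟩, ?_⟩, ?_⟩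
    · rintro ⟨i, j⟩ h
      simp only [InDiag] at *
      simp [h]
    · rintro ⟨i, j⟩ h
      simp only [InDiag] at *
      simpa [h] using hm.pos (i, j) ((hc i j).1 h).1
    · intro i j h
      simp only [InDiag] at *
      have h' : j < c i := by omega
      simpa [h, h'] using hm.row_le i j ((hc i (j + 1)).1 h).1
    · intro i j h
      simp only [InDiag] at *
      have h1 := (hc (i + 1) j).1 h
      have h2 := hm.col_lt i j h1.1
      have h3 : lam (i + 1) ≤ lam i := hl.1 (Nat.le_succ _)
      have h' : j < c i := (hc i j).2 ⟨by omega, by omega⟩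
      simpa [h, h'] using h2
    · rintro ⟨i, j⟩
      dsimp only
      split_ifs with h
      · exact ((hc i j).1 h).2
      · exact Nat.zero_le _
    · funext ⟨i, j⟩
      have h1 := hc i j
      have h2 := hN (i, j)
      have h3 := hm.zero_off (i, j)
      simp only [InDiag, extendTab] at *
      split_ifs <;> grind

lemma mem_tableaux {r : ℕ} (N : ℕ) {lam : ℕ → ℕ} (hl : IsShape r lam) (m : ℕ × ℕ → ℕ) :
    m ∈ tableaux r N lam ↔ IsSSYT lam m ∧ ∀ p, m p ≤ N := by
  induction N generalizing lam m with
  | zero =>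
    unfold tableaux
    constructor
    · split_ifs with h
      · rw [Finset.mem_singleton]
        rintro rfl
        subst h
        exact ⟨⟨by simp, by simp [InDiag], by simp, by simp [InDiag]⟩, by simp⟩
      · simp
    · rintro ⟨h1, h2⟩
      have hm : m = 0 := funext fun p => Nat.le_zero.1 (h2 p)
      have : lam = 0 := by
        funext i
        by_contra hne
        have := h1.pos (i, 0) (Nat.pos_of_ne_zero hne)
        have := h2 (i, 0)
        omega
      simp [this, hm]
  | succ N ih =>
    simp only [tableaux, Finset.mem_biUnion, Finset.mem_image]
    constructor
    · rintro ⟨mu, hmu, m', hm', rfl⟩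
      rw [ih (isShape_pad hl hmu)] at hm'
      refine ⟨extendTab_isSSYT hl hmu hm'.1 hm'.2, fun p => ?_⟩
      have := hm'.2 p
      unfold extendTab
      split_ifs <;> omega
    · rintro ⟨h1, h2⟩
      obtain ⟨mu, hmu, m', hm', he⟩ := exists_extendTab_eq hl h1 h2
      exact ⟨mu, hmu, m', (ih (isShape_pad hl hmu) m').2 hm', he⟩

/-- The monomial of a filling: the product of `x (m (i, j))` over all boxes. -/
def weight (r : ℕ) (x : ℕ → ℝ) (lam : ℕ → ℕ) (m : ℕ × ℕ → ℕ) : ℝ :=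
  ∏ i : Fin r, ∏ j ∈ Finset.range (lam i), x (m (i, j))

lemma weight_extendTab {r : ℕ} (x : ℕ → ℝ) {lam : ℕ → ℕ} {mu : Fin r → ℕ}
    (hmu : mu ∈ interlacing r lam) (a : ℕ) (m : ℕ × ℕ → ℕ) :
    weight r x lam (extendTab lam (pad mu) a m) =
      (∏ i : Fin r, x a ^ (lam i - mu i)) * weight r x (pad mu) m := by
  unfold weight
  rw [← Finset.prod_mul_distrib]
  refine Finset.prod_congr rfl fun i _ => ?_
  have hp : pad mu i = mu i := by simp [pad]
  have hle := pad_le hmu i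
  rw [← Finset.prod_range_mul_prod_Ico _ hle, mul_comm]
  congr 1
  · rw [Finset.prod_congr rfl (g := fun _ => x a), Finset.prod_const, Nat.card_Ico, hp]
    intro j hj
    rw [Finset.mem_Ico] at hj
    simp [extendTab, InDiag, hj.2, not_lt.2 hj.1]
  · refine Finset.prod_congr rfl fun j hj => ?_
    rw [Finset.mem_range] at hj
    simp [extendTab, InDiag, hj]

/-- The Schur polynomial of shape `lam` at `x 1, …, x N`, as a sum over tableaux. -/
def schurSum (r : ℕ) (x : ℕ → ℝ) (N : ℕ) (lam : ℕ → ℕ) : ℝ :=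
  ∑ m ∈ tableaux r N lam, weight r x lam m

/-- The branching rule for Schur polynomials. -/
lemma schurSum_succ {r : ℕ} (x : ℕ → ℝ) (N : ℕ) {lam : ℕ → ℕ} (hl : IsShape r lam) :
    schurSum r x (N + 1) lam = ∑ mu ∈ interlacing r lam,
      (∏ i : Fin r, x (N + 1) ^ (lam i - mu i)) * schurSum r x N (pad mu) := by
  classical
  -- the shape `mu` is recovered from an extended tableau as the set of its entries `≤ N`
  have key : ∀ mu ∈ interlacing r lam, ∀ m ∈ tableaux r N (pad mu), ∀ i j,
      j < pad mu i ↔ j < lam i ∧ extendTab lam (pad mu) (N + 1) m (i, j) ≤ N := by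
    intro mu hmu m hm i j
    rw [mem_tableaux N (isShape_pad hl hmu)] at hm
    have h1 := hm.2 (i, j)
    have h2 := pad_le hmu i
    simp only [extendTab, InDiag]
    split_ifs <;> grind
  unfold schurSum
  simp only [tableaux]
  rw [Finset.sum_biUnion]
  · refine Finset.sum_congr rfl fun mu hmu => ?_
    rw [Finset.sum_image, Finset.mul_sum]
    · exact Finset.sum_congr rfl fun m _ => weight_extendTab x hmu _ m
    · intro m hm m' hm' he
      rw [Finset.mem_coe, mem_tableaux N (isShape_pad hl hmu)] at hm hm'
      funext p
      by_cases hp : InDiag (pad mu) p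
      · simpa [extendTab, hp] using congrFun he p
      · rw [hm.1.zero_off p hp, hm'.1.zero_off p hp]
  · intro mu hmu mu' hmu' hne
    rw [Function.onFun, Finset.disjoint_left]
    rintro _ h h'
    obtain ⟨m, hm, rfl⟩ := Finset.mem_image.1 h
    obtain ⟨m', hm', he⟩ := Finset.mem_image.1 h'
    apply hne
    funext i
    have hpad : pad mu i = pad mu' i := by
      refine eq_of_forall_lt_iff fun j => ?_
      rw [key mu hmu m hm, key mu' hmu' m' hm', he]
    simpa [pad] using hpad

/-! ### Complete homogeneous symmetric polynomials -/

/-- The generating series `∏ 1 / (1 - x i X)`, `1 ≤ i ≤ N`, of the complete homogeneous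
symmetric polynomials in `x 1, …, x N`. -/
def genH (x : ℕ → ℝ) (N : ℕ) : PowerSeries ℝ :=
  ∏ i ∈ Finset.range N, PowerSeries.mk fun n => x (i + 1) ^ n

/-- The complete homogeneous symmetric polynomial of degree `z` in `x 1, …, x N`, which is
`0` for `z < 0`. -/
def hsym (x : ℕ → ℝ) (N : ℕ) (z : ℤ) : ℝ :=
  if 0 ≤ z then PowerSeries.coeff z.toNat (genH x N) else 0

/-- The power sum `x 1 ^ d + ⋯ + x N ^ d`. -/
def psum (x : ℕ → ℝ) (N d : ℕ) : ℝ := ∑ i ∈ Finset.range N, x (i + 1) ^ d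

lemma geom_mul (a : ℝ) :
    (PowerSeries.mk fun n => a ^ n) * (1 - PowerSeries.C a * PowerSeries.X) = 1 := by
  ext n
  cases n with
  | zero => simp
  | succ n =>
    rw [mul_sub, mul_one, ← mul_assoc, map_sub, PowerSeries.coeff_succ_mul_X,
      PowerSeries.coeff_mul_C]
    simp [PowerSeries.coeff_one, pow_succ]

lemma hsym_of_neg (x : ℕ → ℝ) (N : ℕ) {z : ℤ} (hz : z < 0) : hsym x N z = 0 := by
  simp [hsym, not_le.2 hz]

lemma hsym_natCast (x : ℕ → ℝ) (N n : ℕ) :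
    hsym x N (n : ℤ) = PowerSeries.coeff n (genH x N) := by
  simp [hsym]

lemma hsym_zero_left (x : ℕ → ℝ) (z : ℤ) : hsym x 0 z = if z = 0 then 1 else 0 := by
  rcases lt_or_ge z 0 with hz | hz
  · rw [hsym_of_neg x 0 hz, if_neg hz.ne]
  · lift z to ℕ using hz
    rw [hsym_natCast]
    simp [genH, PowerSeries.coeff_one]

lemma hsym_succ (x : ℕ → ℝ) (N : ℕ) (z : ℤ) :
    hsym x (N + 1) z = hsym x N z + x (N + 1) * hsym x (N + 1) (z - 1) := by
  have hgen : genH x (N + 1) * (1 - PowerSeries.C (x (N + 1)) * PowerSeries.X) = genH x N := by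
    rw [genH, Finset.prod_range_succ, mul_assoc, geom_mul, mul_one, genH]
  rcases lt_or_ge z 0 with hz | hz
  · rw [hsym_of_neg _ _ hz, hsym_of_neg _ _ hz, hsym_of_neg _ _ (by omega : z - 1 < 0)]
    simp
  · lift z to ℕ using hz
    rw [mul_sub, mul_one, ← mul_assoc] at hgen
    cases z with
    | zero =>
      have := congrArg (PowerSeries.coeff 0) hgen
      rw [hsym_natCast, hsym_natCast, hsym_of_neg _ _ (by simp), ← this]
      simp
    | succ n =>
      have := congrArg (PowerSeries.coeff (n + 1)) hgen
      rw [map_sub, PowerSeries.coeff_succ_mul_X, PowerSeries.coeff_mul_C] at this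
      have hc : ((n + 1 : ℕ) : ℤ) - 1 = (n : ℤ) := by push_cast; ring
      rw [hc, hsym_natCast, hsym_natCast, hsym_natCast, ← this]
      ring

/-- Newton's identities in the form `H' = H P`. -/
lemma derivative_genH (x : ℕ → ℝ) (N : ℕ) :
    PowerSeries.derivative ℝ (genH x N) =
      genH x N * PowerSeries.mk fun n => psum x N (n + 1) := by
  induction N with
  | zero =>
    have : (PowerSeries.mk fun n => psum x 0 (n + 1)) = 0 := by ext n; simp [psum]
    rw [this]
    simp [genH]
  | succ N ih =>
    set a := x (N + 1)
    set g : PowerSeries ℝ := PowerSeries.mk fun n => a ^ n with hg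
    have h1 : genH x (N + 1) = genH x N * g := by rw [genH, Finset.prod_range_succ, genH]
    have h2 : (PowerSeries.mk fun n => psum x (N + 1) (n + 1)) =
        (PowerSeries.mk fun n => psum x N (n + 1)) + PowerSeries.C a * g := by
      ext n
      simp [psum, Finset.sum_range_succ, hg, a, pow_succ, mul_comm]
    have h3 : PowerSeries.derivative ℝ g = g * (PowerSeries.C a * g) := by
      have hmul := geom_mul a
      rw [← hg] at hmul
      have hd := congrArg (PowerSeries.derivative ℝ) hmul
      simp only [Derivation.leibniz, map_sub, smul_eq_mul, PowerSeries.derivative_C,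
        PowerSeries.derivative_X, Derivation.map_one_eq_zero] at hd
      linear_combination g * hd - PowerSeries.derivative ℝ g * hmul
    rw [h1, h2, Derivation.leibniz, ih, h3]
    simp only [smul_eq_mul]
    ring

lemma newton (x : ℕ → ℝ) (N n : ℕ) :
    hsym x N ((n + 1 : ℕ) : ℤ) =
      (∑ i ∈ Finset.range (n + 1), hsym x N (i : ℤ) * psum x N (n - i + 1)) / (n + 1) := by
  have h := congrArg (PowerSeries.coeff n) (derivative_genH x N)
  rw [PowerSeries.coeff_derivative, PowerSeries.coeff_mul,
    Finset.Nat.sum_antidiagonal_eq_sum_range_succ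
      (fun i j => PowerSeries.coeff i (genH x N) *
        PowerSeries.coeff j (PowerSeries.mk fun n => psum x N (n + 1)))] at h
  simp only [hsym_natCast]
  rw [eq_div_iff (by positivity), h]
  simp

/-! ### The Jacobi–Trudi formula -/

/-- The Jacobi–Trudi determinant `det (h_{lam i - i + j})` in `x 1, …, x N`. -/
def jacobiTrudi (r : ℕ) (x : ℕ → ℝ) (N : ℕ) (lam : ℕ → ℕ) : ℝ :=
  Matrix.det (Matrix.of fun i j : Fin r => hsym x N ((lam i : ℤ) - i + j))

lemma sum_Icc_hsym (x : ℕ → ℝ) (N : ℕ) (c : ℤ) {a b : ℕ} (hab : a ≤ b) :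
    ∑ t ∈ Finset.Icc a b, x (N + 1) ^ (b - t) * hsym x N (t + c) =
      hsym x (N + 1) (b + c) - x (N + 1) ^ (b - a + 1) * hsym x (N + 1) (a + c - 1) := by
  induction b, hab using Nat.le_induction with
  | base =>
    rw [hsym_succ x N (a + c)]
    simp
  | succ b hab ih =>
    rw [Finset.sum_Icc_succ_top (by omega), hsym_succ x N ((b + 1 : ℕ) + c)]
    have h1 : ∑ t ∈ Finset.Icc a b, x (N + 1) ^ (b + 1 - t) * hsym x N (t + c) =
        x (N + 1) * ∑ t ∈ Finset.Icc a b, x (N + 1) ^ (b - t) * hsym x N (t + c) := by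
      rw [Finset.mul_sum]
      refine Finset.sum_congr rfl fun t ht => ?_
      rw [Finset.mem_Icc] at ht
      rw [Nat.succ_sub ht.2, pow_succ]
      ring
    have h2 : ((b + 1 : ℕ) : ℤ) + c - 1 = b + c := by push_cast; ring
    rw [h1, ih, h2, Nat.succ_sub hab]
    simp only [Nat.sub_self, pow_zero, pow_succ]
    ring

/-- Subtracting from each row a multiple of the next one preserves the determinant. -/
lemma det_sub_next {r : ℕ} (A B : Matrix (Fin r) (Fin r) ℝ) (c : Fin r → ℝ)
    (h : ∀ i j, B i j = A i j - c i * if h : (i : ℕ) + 1 < r then A ⟨i + 1, h⟩ j else 0) :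
    B.det = A.det := by
  let U : Matrix (Fin r) (Fin r) ℝ := Matrix.of fun i k =>
    if i = k then 1 else if (i : ℕ) + 1 = k then -c i else 0
  have hU : U.det = 1 := by
    rw [Matrix.det_of_isUpperTriangular]
    · simp [U]
    · intro i k hik
      have : (k : ℕ) < i := hik
      simp only [U, Matrix.of_apply]
      rw [if_neg (by intro h; subst h; omega), if_neg (by omega)]
  have hB : B = U * A := by
    ext i j
    rw [Matrix.mul_apply, h]
    have hsplit : ∀ k, U i k * A k j =
        (if i = k then A k j else 0) + (if (i : ℕ) + 1 = k then -c i * A k j else 0) := by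
      intro k
      simp only [U, Matrix.of_apply]
      by_cases h1 : i = k
      · subst h1; simp
      · simp [h1]
    rw [Finset.sum_congr rfl fun k _ => hsplit k, Finset.sum_add_distrib]
    simp only [Finset.sum_ite_eq, Finset.mem_univ, if_true]
    split_ifs with hi
    · rw [Finset.sum_eq_single (⟨i + 1, hi⟩ : Fin r)]
      · simp; ring
      · intro k _ hk
        rw [if_neg]
        intro he
        exact hk (Fin.ext he.symm)
      · simp
    · rw [Finset.sum_eq_zero]
      · simp
      · intro k _
        rw [if_neg]
        have := k.2
        omega
  rw [hB, Matrix.det_mul, hU, one_mul]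

/-- The Jacobi–Trudi determinant satisfies the same branching rule as Schur polynomials. -/
lemma jacobiTrudi_succ {r : ℕ} (x : ℕ → ℝ) (N : ℕ) {lam : ℕ → ℕ} (hl : IsShape r lam) :
    jacobiTrudi r x (N + 1) lam = ∑ mu ∈ interlacing r lam,
      (∏ i : Fin r, x (N + 1) ^ (lam i - mu i)) * jacobiTrudi r x N (pad mu) := by
  unfold jacobiTrudi
  rw [← det_sub_next _ (Matrix.of fun i : Fin r => ∑ t ∈ Finset.Icc (lam (i + 1)) (lam i),
      x (N + 1) ^ (lam i - t) • fun j : Fin r => hsym x N ((t : ℤ) - i + j))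
      (fun i => x (N + 1) ^ (lam i - lam (i + 1) + 1))]
  · have := (Matrix.detRowAlternating (n := Fin r) (R := ℝ)).toMultilinearMap.map_sum_finset
      (α := fun _ => ℕ)
      (fun i t => x (N + 1) ^ (lam i - t) • fun j : Fin r => hsym x N ((t : ℤ) - i + j))
      (fun i => Finset.Icc (lam (i + 1)) (lam i))
    refine this.trans (Finset.sum_congr rfl fun mu _ => ?_)
    rw [MultilinearMap.map_smul_univ, smul_eq_mul]
    congr 1
    simp only [pad, Fin.is_lt, dite_true, Fin.eta]
    rfl
  · intro i j
    have h := sum_Icc_hsym x N (-(i : ℤ) + j) (hl.1 (Nat.le_succ (i : ℕ)))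
    simp only [Matrix.of_apply, Finset.sum_apply, Pi.smul_apply, smul_eq_mul]
    have e : ∀ t : ℕ, (t : ℤ) - i + j = t + (-(i : ℤ) + j) := fun t => by ring
    simp only [e]
    rw [h]
    congr 2
    split_ifs with hi
    · congr 1
      push_cast
      ring
    · rw [Nat.succ_eq_add_one, hl.2 (i + 1) (by omega)]
      apply hsym_of_neg
      have := i.2
      have := j.2
      push_cast
      omega

/-- The Jacobi–Trudi formula, by induction on `N` from the common branching rule. -/
lemma schurSum_eq_jacobiTrudi {r : ℕ} (x : ℕ → ℝ) (N : ℕ) {lam : ℕ → ℕ}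
    (hl : IsShape r lam) : schurSum r x N lam = jacobiTrudi r x N lam := by
  induction N generalizing lam with
  | zero =>
    unfold schurSum jacobiTrudi tableaux
    simp only [hsym_zero_left]
    split_ifs with h
    · subst h
      have : (Matrix.of fun i j : Fin r =>
          if (((0 : ℕ → ℕ) i : ℕ) : ℤ) - i + j = 0 then (1 : ℝ) else 0) = 1 := by
        ext i j
        simp only [Matrix.of_apply, Matrix.one_apply]
        congr 1
        simp only [Pi.zero_apply, Fin.ext_iff, eq_iff_iff]
        omega
      rw [this]
      simp [weight]
    · have h0 : lam 0 ≠ 0 := by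
        intro h0
        apply h
        funext i
        exact Nat.le_zero.1 (h0 ▸ hl.1 (Nat.zero_le i))
      have hr : 0 < r := by
        by_contra hr
        exact h0 (hl.2 0 (by omega))
      rw [Finset.sum_empty, Matrix.det_eq_zero_of_row_eq_zero ⟨0, hr⟩]
      intro j
      simp only [Matrix.of_apply]
      rw [if_neg]
      push_cast
      omega
  | succ N ih =>
    rw [schurSum_succ x N hl, jacobiTrudi_succ x N hl]
    exact Finset.sum_congr rfl fun mu hmu => by rw [ih (isShape_pad hl hmu)]

/-! ### Passage to infinitely many variables -/

open Filter Topology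

/-- The specialization `x m = m ^ (-2k)`. -/
def zetaVar (k m : ℕ) : ℝ := ((m : ℝ) ^ (2 * k))⁻¹

/-- Euler's formula for the even zeta values. -/
lemma tendsto_psum {k : ℕ} (hk : 0 < k) (d : ℕ) :
    ∃ q : ℚ, Tendsto (fun N => psum (zetaVar k) N (d + 1)) atTop
      (𝓝 ((q : ℝ) * Real.pi ^ (2 * k * (d + 1)))) := by
  have hK : k * (d + 1) ≠ 0 := by positivity
  have h := (hasSum_zeta_nat hK).tendsto_sum_nat.comp (tendsto_add_atTop_nat 1)
  refine ⟨(-1) ^ (k * (d + 1) + 1) * 2 ^ (2 * (k * (d + 1)) - 1) *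
    bernoulli (2 * (k * (d + 1))) / (2 * (k * (d + 1))).factorial, ?_⟩
  convert h using 1
  · funext N
    simp only [Function.comp_apply, psum, zetaVar, Finset.sum_range_succ']
    rw [Nat.cast_zero, zero_pow (by positivity), div_zero, add_zero]
    refine Finset.sum_congr rfl fun i _ => ?_
    rw [inv_pow, ← pow_mul, one_div, mul_assoc]
  · congr 1
    push_cast
    rw [← mul_assoc 2 k]
    ring

lemma tendsto_hsym_nat {k : ℕ} (hk : 0 < k) (n : ℕ) :
    ∃ q : ℚ, Tendsto (fun N => hsym (zetaVar k) N (n : ℤ)) atTop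
      (𝓝 ((q : ℝ) * Real.pi ^ (2 * k * n))) := by
  induction n using Nat.strong_induction_on with
  | _ n ih =>
    cases n with
    | zero =>
      refine ⟨1, ?_⟩
      have : ∀ N, hsym (zetaVar k) N ((0 : ℕ) : ℤ) = 1 := by
        intro N
        induction N with
        | zero => simp [hsym_zero_left]
        | succ N ihN => rw [hsym_succ, ihN, hsym_of_neg _ _ (by simp)]; simp
      simp only [this]
      simp
    | succ n =>
      choose! qh hqh using ih
      choose qp hqp using tendsto_psum hk
      refine ⟨(∑ i ∈ Finset.range (n + 1), qh i * qp (n - i)) / (n + 1), ?_⟩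
      simp only [newton]
      have : ((((∑ i ∈ Finset.range (n + 1), qh i * qp (n - i)) / (n + 1) : ℚ)) : ℝ) *
          Real.pi ^ (2 * k * (n + 1)) = (∑ i ∈ Finset.range (n + 1),
            ((qh i : ℝ) * Real.pi ^ (2 * k * i)) *
              ((qp (n - i) : ℝ) * Real.pi ^ (2 * k * (n - i + 1)))) / (n + 1) := by
        push_cast
        rw [div_mul_eq_mul_div, Finset.sum_mul]
        congr 1
        refine Finset.sum_congr rfl fun i hi => ?_
        have hi' : i ≤ n := Nat.lt_succ_iff.1 (Finset.mem_range.1 hi)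
        have he : 2 * k * (n + 1) = 2 * k * i + 2 * k * (n - i + 1) := by
          rw [← mul_add]
          congr 1
          omega
        rw [he, pow_add]
        ring
      rw [this]
      refine Tendsto.div_const (tendsto_finsetSum _ fun i hi => ?_) _
      exact (hqh i (Finset.mem_range.1 hi)).mul (hqp (n - i))

lemma tendsto_hsym {k : ℕ} (hk : 0 < k) (z : ℤ) :
    ∃ q : ℚ, Tendsto (fun N => hsym (zetaVar k) N z) atTop
      (𝓝 ((q : ℝ) * (Real.pi ^ (2 * k)) ^ z)) := by
  rcases lt_or_ge z 0 with hz | hz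
  · exact ⟨0, by simp [hsym_of_neg _ _ hz]⟩
  · lift z to ℕ using hz
    obtain ⟨q, hq⟩ := tendsto_hsym_nat hk z
    exact ⟨q, by rwa [zpow_natCast, ← pow_mul]⟩

/-- Each term of the Leibniz expansion of the Jacobi–Trudi determinant has total degree
`∑ lam i`, so the limit is a rational multiple of a single power of `π`. -/
lemma tendsto_jacobiTrudi {k : ℕ} (hk : 0 < k) (r : ℕ) (lam : ℕ → ℕ) :
    ∃ q : ℚ, Tendsto (fun N => jacobiTrudi r (zetaVar k) N lam) atTop
      (𝓝 ((q : ℝ) * Real.pi ^ (2 * k * ∑ i ∈ Finset.range r, lam i))) := by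
  choose q hq using tendsto_hsym hk
  refine ⟨Matrix.det (Matrix.of fun i j : Fin r => q ((lam i : ℤ) - i + j)), ?_⟩
  unfold jacobiTrudi
  simp only [Matrix.det_apply', Matrix.of_apply]
  push_cast
  rw [Finset.sum_mul]
  refine tendsto_finsetSum _ fun σ _ => ?_
  rw [mul_assoc]
  refine Tendsto.const_mul _ ?_
  have hprod : (∏ i : Fin r, (q ((lam (σ i) : ℤ) - (σ i : ℕ) + (i : ℕ)) : ℝ)) *
      Real.pi ^ (2 * k * ∑ i ∈ Finset.range r, lam i) =
      ∏ i : Fin r, ((q ((lam (σ i) : ℤ) - (σ i : ℕ) + (i : ℕ)) : ℝ) *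
        (Real.pi ^ (2 * k)) ^ ((lam (σ i) : ℤ) - (σ i : ℕ) + (i : ℕ))) := by
    have hpi : (Real.pi ^ (2 * k) : ℝ) ≠ 0 := pow_ne_zero _ Real.pi_ne_zero
    have hz : ∀ (s : Finset (Fin r)) (f : Fin r → ℤ),
        ∏ i ∈ s, (Real.pi ^ (2 * k) : ℝ) ^ f i = (Real.pi ^ (2 * k)) ^ ∑ i ∈ s, f i := by
      intro s f
      induction s using Finset.cons_induction with
      | empty => simp
      | cons a s ha ih => rw [Finset.prod_cons, Finset.sum_cons, ih, zpow_add₀ hpi]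
    have hs : ∑ i : Fin r, ((lam (σ i) : ℤ) - (σ i : ℕ) + (i : ℕ)) =
        ((∑ i ∈ Finset.range r, lam i : ℕ) : ℤ) := by
      rw [Finset.sum_add_distrib, Finset.sum_sub_distrib,
        Equiv.sum_comp σ (fun i : Fin r => (lam i : ℤ)),
        Equiv.sum_comp σ (fun i : Fin r => ((i : ℕ) : ℤ)), Finset.sum_range]
      push_cast
      ring
    rw [Finset.prod_mul_distrib, hz, hs, zpow_natCast, ← pow_mul]
  rw [hprod]
  exact tendsto_finsetProd _ fun i _ => hq _

lemma weight_nonneg (r k : ℕ) (lam : ℕ → ℕ) (m : ℕ × ℕ → ℕ) :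
    0 ≤ weight r (zetaVar k) lam m :=
  Finset.prod_nonneg fun _ _ => Finset.prod_nonneg fun _ _ => by
    unfold zetaVar
    positivity

lemma term_eq_weight (r k : ℕ) (lam : ℕ → ℕ) (m : ℕ × ℕ → ℕ) :
    term r lam (fun _ => ((2 * k : ℕ) : ℂ)) m = (weight r (zetaVar k) lam m : ℂ) := by
  unfold term weight zetaVar
  rw [Finset.prod_range]
  push_cast
  refine Finset.prod_congr rfl fun i _ => Finset.prod_congr rfl fun j _ => ?_
  rw [Complex.cpow_neg]
  congr 1
  exact_mod_cast Complex.cpow_natCast (m (i, j) : ℂ) (2 * k)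

/-- The diagram is finite, so the sum of all entries is a bound. -/
lemma IsSSYT.exists_bound {r : ℕ} {lam : ℕ → ℕ} (hl : IsShape r lam) {m : ℕ × ℕ → ℕ}
    (hm : IsSSYT lam m) : ∃ N, ∀ p, m p ≤ N := by
  refine ⟨∑ i ∈ Finset.range r, ∑ j ∈ Finset.range (lam i), m (i, j), ?_⟩
  rintro ⟨i, j⟩
  by_cases hp : InDiag lam (i, j)
  · have hj : j < lam i := hp
    have hi : i < r := by
      by_contra hi
      rw [hl.2 i (by omega)] at hj
      omega
    calc m (i, j) ≤ ∑ j ∈ Finset.range (lam i), m (i, j) :=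
          Finset.single_le_sum (f := fun j => m (i, j)) (fun _ _ => Nat.zero_le _)
            (Finset.mem_range.2 hj)
      _ ≤ _ := Finset.single_le_sum (f := fun i => ∑ j ∈ Finset.range (lam i), m (i, j))
            (fun _ _ => Nat.zero_le _) (Finset.mem_range.2 hi)
  · rw [hm.zero_off _ hp]
    exact Nat.zero_le _

/-- The Schur zeta value is the limit of the Schur polynomials in finitely many variables.
Since the terms are nonnegative, convergence of these partial sums gives summability. -/
lemma hasSum_weight {r k : ℕ} {lam : ℕ → ℕ} (hl : IsShape r lam) {L : ℝ}
    (hL : Tendsto (fun N => schurSum r (zetaVar k) N lam) atTop (𝓝 L)) :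
    HasSum (fun M : {m : ℕ × ℕ → ℕ // IsSSYT lam m} => weight r (zetaVar k) lam M.1) L := by
  classical
  let F : ℕ → Finset {m : ℕ × ℕ → ℕ // IsSSYT lam m} := fun N =>
    (tableaux r N lam).subtype (IsSSYT lam)
  have hmem : ∀ N M, M ∈ F N ↔ ∀ p, M.1 p ≤ N := by
    intro N M
    simp only [F, Finset.mem_subtype, mem_tableaux N hl]
    exact and_iff_right M.2
  have hmono : Monotone F := fun N N' h M hM =>
    (hmem _ _).2 fun p => ((hmem _ _).1 hM p).trans h
  have hF : Tendsto F atTop atTop := by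
    refine tendsto_atTop_finset_of_monotone hmono fun M => ?_
    obtain ⟨N, hN⟩ := M.2.exists_bound hl
    exact ⟨N, (hmem _ _).2 hN⟩
  have hsum : ∀ N, ∑ M ∈ F N, weight r (zetaVar k) lam M.1 = schurSum r (zetaVar k) N lam :=
    fun N => Finset.sum_subtype_of_mem _ fun m hm => ((mem_tableaux N hl m).1 hm).1
  have hsummable : Summable fun M : {m : ℕ × ℕ → ℕ // IsSSYT lam m} =>
      weight r (zetaVar k) lam M.1 := by
    obtain ⟨c, hc⟩ := hL.bddAbove_range
    refine summable_of_sum_le (c := c) (fun M => weight_nonneg _ _ _ _) fun u => ?_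
    obtain ⟨N, hN⟩ := (hF.eventually (eventually_ge_atTop u)).exists
    calc _ ≤ ∑ M ∈ F N, weight r (zetaVar k) lam M.1 :=
          Finset.sum_le_sum_of_subset_of_nonneg hN fun M _ _ => weight_nonneg _ _ _ _
      _ = _ := hsum N
      _ ≤ c := hc ⟨N, rfl⟩
  have hlim := hsummable.hasSum.comp hF
  simp only [Function.comp_def, hsum] at hlim
  rw [tendsto_nhds_unique hL hlim]
  exact hsummable.hasSum

end SMZ

/-- `ζ_λ({2k}^λ) ∈ ℚ · π^{2k|λ|}` for every partition `λ` and every `k ≥ 1`. -/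
theorem schurZeta_two_k_rat_mul_pi_pow
    (n r : ℕ) (lam : ℕ → ℕ) (hlam : SMZ.IsPartitionWith r lam)
    (hn : ∑ i ∈ Finset.range r, lam i = n)
    (k : ℕ) (hk : 0 < k) :
    ∃ q : ℚ, SMZ.schurZeta r lam (fun _ => ((2 * k : ℕ) : ℂ)) =
      (q : ℂ) * (Real.pi : ℂ) ^ (2 * k * n) := by
  have hl : SMZ.IsShape r lam := by
    refine ⟨hlam.1, fun i hi => ?_⟩
    have := hlam.2 i
    omega
  obtain ⟨q, hq⟩ := SMZ.tendsto_jacobiTrudi hk r lam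
  refine ⟨q, ?_⟩
  simp only [← SMZ.schurSum_eq_jacobiTrudi _ _ hl] at hq
  have h := (SMZ.hasSum_weight hl hq).tsum_eq
  unfold SMZ.schurZeta
  simp only [SMZ.term_eq_weight]
  rw [← Complex.ofReal_tsum, h, hn]
  push_cast
  rfl
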